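/- Necessity of empty views (first example of Section 6): Let α = {a₁, a₂, a₃} and β = {b₁, b₂}. Let L_s be the language over α ⊕ β consisting of the four two-letter words [inl a₁, inl a₂], [inl a₁, inl a₃], [inl a₃, inl a₂], [inl a₃, inl a₃] (i.e., the concatenation (a₁ + a₃)·(a₂ + a₃)), and let L_t = {[b₁, b₂]}. Then: (i) the views V₀ with V₀(a₁) = {[b₁]}, V₀(a₂) = {[b₂]}, V₀(a₃) = ∅ capture ⟨L_s, L_t⟩; and (ii) every set of views V capturing ⟨L_s, L_t⟩ satisfies V(a₃) = ∅. -/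

import Mathlib

/-! If `w ∈ V a₃`, then `w ++ w` lies in the substitution of `[a₃, a₃]`, hence equals `b₁ b₂`; so `w`
is a single letter and `b₁ = b₂`, a contradiction. The views `V₀` capture the mapping because only
`[a₁, a₂]` has a nonempty substitution, namely `{b₁ b₂}`. -/

/-- The three-letter source alphabet of the example. -/
inductive SrcEx : Type
  | a1 | a2 | a3
deriving DecidableEq

/-- The two-letter target alphabet of the example. -/
inductive TgtEx : Type
  | b1 | b2
deriving DecidableEq

/-- Substituted letter: a source letter is replaced by its view, a target letter by itself. -/
def viewHat {α β : Type*} (V : α → Language β) : α ⊕ β → Language β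
  | Sum.inl a => V a
  | Sum.inr b => {[b]}

/-- Substitution `s[V]` of views into a word over the combined alphabet. -/
def subst {α β : Type*} (V : α → Language β) (s : List (α ⊕ β)) : Language β :=
  (s.map (viewHat V)).prod

/-- Substitution `L_s[V]` of views into a source language. -/
def langSubst {α β : Type*} (V : α → Language β) (Ls : Language (α ⊕ β)) : Language β :=
  ⋃ s ∈ Ls, subst V s

/-- Views `V` capture the mapping `⟨L_s, L_t⟩`. -/
def Captures {α β : Type*} (V : α → Language β) (Ls : Language (α ⊕ β))
    (Lt : Language β) : Prop :=
  langSubst V Ls ≤ Lt ∧ langSubst V Ls ≠ 0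

/-- The source language `(a₁ + a₃) · (a₂ + a₃)` of the example. -/
def LsEx : Language (SrcEx ⊕ TgtEx) :=
  {[Sum.inl .a1, Sum.inl .a2], [Sum.inl .a1, Sum.inl .a3],
   [Sum.inl .a3, Sum.inl .a2], [Sum.inl .a3, Sum.inl .a3]}

/-- The target language `b₁ · b₂` of the example. -/
def LtEx : Language TgtEx := {[TgtEx.b1, TgtEx.b2]}

/-- The views `V₀(a₁) = b₁`, `V₀(a₂) = b₂`, `V₀(a₃) = ∅` of the example. -/
def V0Ex : SrcEx → Language TgtEx
  | .a1 => {[TgtEx.b1]}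
  | .a2 => {[TgtEx.b2]}
  | .a3 => 0

/-- `L_s[V] = (V a₁ + V a₃) · (V a₂ + V a₃)`, stated elementwise. -/
theorem mem_langSubst_LsEx (V : SrcEx → Language TgtEx) (x : List TgtEx) :
    x ∈ langSubst V LsEx ↔
      ∃ u v, (u ∈ V .a1 ∨ u ∈ V .a3) ∧ (v ∈ V .a2 ∨ v ∈ V .a3) ∧ u ++ v = x := by
  have h : x ∈ langSubst V LsEx ↔ ∃ s ∈ LsEx, x ∈ subst V s := by
    unfold langSubst
    exact Set.mem_iUnion₂.trans (by simp only [exists_prop]; rfl)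
  have hL : ∀ s, s ∈ LsEx ↔ s = [Sum.inl .a1, Sum.inl .a2] ∨ s = [Sum.inl .a1, Sum.inl .a3] ∨
      s = [Sum.inl .a3, Sum.inl .a2] ∨ s = [Sum.inl .a3, Sum.inl .a3] := fun s => Iff.rfl
  rw [h]
  simp only [hL, or_and_right, exists_or, exists_eq_left, subst, List.map_cons, List.map_nil,
    List.prod_cons, List.prod_nil, mul_one, viewHat, Language.mem_mul]
  grind

/-- Necessity of empty views (first example of Section 6): the views `V₀` capture
`⟨(a₁ + a₃)·(a₂ + a₃), b₁·b₂⟩`, and every set of views capturing this mapping assigns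
the empty language to `a₃`. -/
theorem empty_views_necessary :
    Captures V0Ex LsEx LtEx ∧
    ∀ V : SrcEx → Language TgtEx, Captures V LsEx LtEx → V .a3 = 0 := by
  refine ⟨⟨?_, ?_⟩, ?_⟩
  · intro x hx
    obtain ⟨u, v, hu, hv, rfl⟩ := (mem_langSubst_LsEx _ _).1 hx
    have hu' : u = [TgtEx.b1] := hu.elim id (fun h => (Language.notMem_zero _ h).elim)
    have hv' : v = [TgtEx.b2] := hv.elim id (fun h => (Language.notMem_zero _ h).elim)
    subst hu' hv'
    rfl
  · intro h0
    have h : [TgtEx.b1, TgtEx.b2] ∈ langSubst V0Ex LsEx :=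
      (mem_langSubst_LsEx _ _).2 ⟨[TgtEx.b1], [TgtEx.b2], Or.inl rfl, Or.inl rfl, rfl⟩
    rw [h0] at h
    exact Language.notMem_zero _ h
  · rintro V ⟨hV, -⟩
    ext w
    refine ⟨fun hw => ?_, fun hw => (Language.notMem_zero _ hw).elim⟩
    have h : w ++ w = [TgtEx.b1, TgtEx.b2] :=
      hV ((mem_langSubst_LsEx _ _).2 ⟨w, w, Or.inr hw, Or.inr hw, rfl⟩)
    have hl : w.length = 1 := by
      have := congrArg List.length h
      simp at this
      omega
    obtain ⟨b, rfl⟩ := List.length_eq_one_iff.1 hl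
    simp at h
    exact absurd (h.1.symm.trans h.2) (by decide)
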